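/- Every graph of maximum average degree less than d + 1 + 2/(d+4) is weakly d-degenerate, where d ≥ 0 is an integer. -/

import Mathlib

/-- The maximum average degree of `G` is less than `x`: every non-null subgraph `H`
satisfies `2|E(H)| < x·|V(H)|`. -/
def MadLT {V : Type*} (G : SimpleGraph V) (x : ℝ) : Prop :=
  ∀ H : G.Subgraph, H.verts.Nonempty → 2 * (H.edgeSet.ncard : ℝ) < x * H.verts.ncard

/-- `G` is weakly `d`-degenerate: every subgraph `G'` (with at least one vertex) either has
minimum degree at most `d`, or contains a set of `d+1` vertices of degree `d+1` (in `G'`)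
inducing a connected subgraph. -/
def WeaklyDegenerate {V : Type*} (G : SimpleGraph V) (d : ℕ) : Prop :=
  ∀ H : G.Subgraph, H.verts.Nonempty →
    (∃ v ∈ H.verts, (H.neighborSet v).ncard ≤ d) ∨
    (∃ P : Finset V, ↑P ⊆ H.verts ∧ P.card = d + 1 ∧
      (∀ v ∈ P, (H.neighborSet v).ncard = d + 1) ∧ (H.induce ↑P).Connected)

theorem stmt13 {V : Type*} [Fintype V] (d : ℕ) (G : SimpleGraph V)
    (h : MadLT G (d + 1 + 2 / (d + 4))) : WeaklyDegenerate G d := by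
  classical
  intro H hne
  by_contra hcon
  rw [not_or] at hcon
  obtain ⟨h1, h2⟩ := hcon
  push Not at h1
  have hlt := h H hne
  let K := H.spanningCoe
  have hdeg : ∀ v, (H.neighborSet v).ncard = K.degree v := by
    intro v
    rw [← SimpleGraph.card_neighborFinset_eq_degree, ← Set.ncard_coe_finset]
    congr 1
    ext u
    simp [K]
  have hE : H.edgeSet.ncard = K.edgeFinset.card := by
    rw [← Set.ncard_coe_finset]
    congr 1
    simp [K]
  let W : Finset V := H.verts.toFinset
  have hW : H.verts.ncard = W.card := Set.ncard_eq_toFinset_card' _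
  have hmW : ∀ v, v ∈ W ↔ v ∈ H.verts := by intro v; simp [W]
  let L := W.filter (fun v => K.degree v = d + 1)
  let B := W.filter (fun v => ¬ K.degree v = d + 1)
  have hLB : L.card + B.card = W.card := Finset.card_filter_add_card_filter_not _
  have hsum : ∑ v ∈ L, K.degree v + ∑ v ∈ B, K.degree v = 2 * K.edgeFinset.card := by
    rw [Finset.sum_filter_add_sum_filter_not, ← K.sum_degrees_eq_twice_card_edges]
    apply Finset.sum_subset (Finset.subset_univ _)
    intro v _ hv
    rw [← SimpleGraph.card_neighborFinset_eq_degree, Finset.card_eq_zero,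
      Finset.eq_empty_iff_forall_notMem]
    intro u hu
    rw [SimpleGraph.mem_neighborFinset] at hu
    exact hv ((hmW v).2 (H.edge_vert hu))
  have hL : ∑ v ∈ L, K.degree v = L.card * (d + 1) := by
    rw [Finset.sum_const_nat]
    intro v hv
    exact (Finset.mem_filter.1 hv).2
  have hB : B.card * (d + 2) ≤ ∑ v ∈ B, K.degree v := by
    rw [← smul_eq_mul]
    apply Finset.card_nsmul_le_sum
    intro v hv
    obtain ⟨hv1, hv2⟩ := Finset.mem_filter.1 hv
    have := h1 v ((hmW v).1 hv1)
    rw [hdeg] at this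
    omega
  have hlow : ∀ v ∈ L, (L.filter (fun u => K.Adj v u)).card < d := by
    intro v hv
    by_contra hc
    push Not at hc
    obtain ⟨T, hT, hTc⟩ := Finset.exists_subset_card_eq hc
    apply h2
    have hPL : insert v T ⊆ L := by
      intro u hu
      rcases Finset.mem_insert.1 hu with rfl | hu
      · exact hv
      · exact (Finset.mem_filter.1 (hT hu)).1
    have hvT : v ∉ T := fun hvT => K.loopless.irrefl v (Finset.mem_filter.1 (hT hvT)).2
    refine ⟨insert v T, ?_, ?_, ?_, ?_⟩
    · intro u hu
      exact (hmW u).1 (Finset.mem_filter.1 (hPL hu)).1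
    · rw [Finset.card_insert_of_notMem hvT, hTc]
    · intro u hu
      rw [hdeg]
      exact (Finset.mem_filter.1 (hPL hu)).2
    · constructor
      rw [SimpleGraph.connected_iff_exists_forall_reachable]
      refine ⟨⟨v, by simp⟩, ?_⟩
      rintro ⟨u, hu⟩
      have hu' : u = v ∨ u ∈ T := by simpa using hu
      rcases hu' with rfl | huT
      · exact SimpleGraph.Reachable.refl _
      · apply SimpleGraph.Adj.reachable
        have : H.Adj v u := (Finset.mem_filter.1 (hT huT)).2
        simp [this, huT]
  have hbig : ∀ v ∈ L, 2 ≤ (B.filter (fun u => K.Adj v u)).card := by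
    intro v hv
    have e : K.degree v = (L.filter (fun u => K.Adj v u)).card
        + (B.filter (fun u => K.Adj v u)).card := by
      rw [← SimpleGraph.card_neighborFinset_eq_degree, ← Finset.card_union_of_disjoint]
      · congr 1
        ext u
        have : K.Adj v u → u ∈ H.verts := fun hu => H.edge_vert (H.symm.symm _ _ hu)
        simp only [SimpleGraph.mem_neighborFinset, Finset.mem_union, Finset.mem_filter, L, B, hmW]
        tauto
      · exact Finset.disjoint_filter_filter (Finset.disjoint_filter_filter_not _ _ _)
    have := hlow v hv
    have := (Finset.mem_filter.1 hv).2
    omega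
  have hdc : L.card * 2 ≤ ∑ v ∈ B, K.degree v := by
    calc L.card * 2 ≤ ∑ v ∈ L, (B.filter (fun u => K.Adj v u)).card := by
          rw [← smul_eq_mul]; exact Finset.card_nsmul_le_sum _ _ _ hbig
      _ = ∑ u ∈ B, (L.filter (fun v => K.Adj v u)).card :=
          Finset.sum_card_bipartiteAbove_eq_sum_card_bipartiteBelow _
      _ ≤ _ := by
          apply Finset.sum_le_sum
          intro u _
          rw [← SimpleGraph.card_neighborFinset_eq_degree]
          apply Finset.card_le_card
          intro v hv
          rw [SimpleGraph.mem_neighborFinset]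
          exact (Finset.mem_filter.1 hv).2.symm
  rw [hE, hW] at hlt
  have hpos : (0 : ℝ) < d + 4 := by positivity
  have hlt2 : (2 * (K.edgeFinset.card : ℝ)) * (d + 4) < ((d + 1) * (d + 4) + 2) * W.card := by
    have := mul_lt_mul_of_pos_right hlt hpos
    have e : ((d : ℝ) + 1 + 2 / (d + 4)) * W.card * (d + 4)
      = ((d + 1) * (d + 4) + 2) * W.card := by field_simp
    linarith
  have hlt3 : (2 * K.edgeFinset.card) * (d + 4) < ((d + 1) * (d + 4) + 2) * W.card := by
    exact_mod_cast hlt2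
  rw [← hsum, hL, ← hLB] at hlt3
  generalize ∑ v ∈ B, K.degree v = S at *
  nlinarith [Nat.mul_le_mul_right (d + 3) hB]
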